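/- Let d ≥ 2 and let V be a nonempty finite set of d×d real orthogonal matrices that is an exact orthogonal 2-design, i.e., for every d²×d² complex matrix M, (1/|V|) Σ_{O ∈ V} O_ℂ^{⊗2} M (O_ℂ^{⊗2})† = ∫_{O(d)} O_ℂ^{⊗2} M (O_ℂ^{⊗2})† dμ_O(O). Then there exists a d×d unitary matrix W such that the set V^W · V = {W O' W† · O_ℂ : O, O' ∈ V} with product weights is a unitary 2-design: for every d²×d² complex matrix M, (1/|V|²) Σ_{O ∈ V} Σ_{O' ∈ V} ((W O'_ℂ W† O_ℂ)^{⊗2}) M ((W O'_ℂ W† O_ℂ)^{⊗2})† = ∫_{U(d)} U^{⊗2} M (U^{⊗2})† dμ_U(U). -/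

import Mathlib

/-!
Write `Ω = ∑ i, eᵢ ⊗ eᵢ`, and let `F` be the flip of `ℂᵈ ⊗ ℂᵈ`. Averaging `M ↦ O^{⊗2} M (O^{⊗2})ᴴ`
over the orthogonal group gives an operator `T M` in the commutant of the matrices `O ⊗ O`, which is
spanned by `1`, `F` and `ΩΩᴴ` (`commutant`); the pairings `tr (M X)` with these three operators `X`
are preserved (`trace_twirl_mul`) and determine `T M`, since their Gram matrix is nonsingular for
`d ≥ 2` (`span_three_ext`). In the same way the unitary twirl of `M` is the element of the span of `1`
and `F` with the same pairings against `1` and `F` as `M` (`unitary_commutant`, `span_two_ext`).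

The average over `V^W · V` is `W^{⊗2} T(U^{⊗2} T(M) (U^{⊗2})ᴴ) (W^{⊗2})ᴴ` with `U = Wᴴ`. It preserves
the pairings with `1` and `F`, and it fixes both of them, so it remains to see that it sends `ΩΩᴴ` into
their span. For this it suffices that `T(U^{⊗2} ΩΩᴴ (U^{⊗2})ᴴ) = (1 + F) / (d + 1)`. The two sides
always agree when paired with `1` and `F`; paired with `ΩΩᴴ` they give `|tr (U Uᵀ)|²` and
`2d / (d + 1)`. A diagonal `U` achieving equality exists by the intermediate value theorem, since
`|tr (U Uᵀ)|` takes the value `d` at `U = 1` and `0` when the squared phases are the `d`-th roots of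
unity (`exists_unitary`).

The commutant is found entrywise: sign changes kill every entry in which an index occurs an odd number
of times, permutations leave four free parameters, and one further reflection, whose relevant row is
`(3/5, 4/5)`, gives the remaining linear relation.
-/


open Matrix MeasureTheory
open scoped Kronecker

/-- Coercion of a real matrix to a complex matrix, entrywise. -/
def oc {d : ℕ} (O : Matrix (Fin d) (Fin d) ℝ) : Matrix (Fin d) (Fin d) ℂ :=
  O.map Complex.ofReal

noncomputable instance (d : ℕ) : MeasurableSpace (Matrix.unitaryGroup (Fin d) ℂ) :=
  borel _

noncomputable instance (d : ℕ) : MeasurableSpace (Matrix.orthogonalGroup (Fin d) ℝ) :=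
  borel _

section

variable {d : ℕ}

/-! ### Conjugation on the tensor square -/

/-- The action `M ↦ U^{⊗2} M (U^{⊗2})ᴴ` of a matrix `U` on operators on `ℂᵈ ⊗ ℂᵈ`. -/
noncomputable def conj2 {d : ℕ} (U : Matrix (Fin d) (Fin d) ℂ)
    (M : Matrix (Fin d × Fin d) (Fin d × Fin d) ℂ) : Matrix (Fin d × Fin d) (Fin d × Fin d) ℂ :=
  (U ⊗ₖ U) * M * (U ⊗ₖ U)ᴴ

/-- The flip `x ⊗ y ↦ y ⊗ x` on `ℂᵈ ⊗ ℂᵈ`. -/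
def flip2 (d : ℕ) : Matrix (Fin d × Fin d) (Fin d × Fin d) ℂ :=
  fun p q => if p.1 = q.2 ∧ p.2 = q.1 then 1 else 0

/-- The operator `ΩΩᴴ`, where `Ω = ∑ i, eᵢ ⊗ eᵢ` is the unnormalised maximally entangled vector. -/
def bell (d : ℕ) : Matrix (Fin d × Fin d) (Fin d × Fin d) ℂ :=
  fun p q => if p.1 = p.2 ∧ q.1 = q.2 then 1 else 0


lemma conj2_mul (U V : Matrix (Fin d) (Fin d) ℂ) (M : Matrix (Fin d × Fin d) (Fin d × Fin d) ℂ) :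
    conj2 (U * V) M = conj2 U (conj2 V M) := by
  simp only [conj2, mul_kronecker_mul, conjTranspose_mul, Matrix.mul_assoc]

lemma conj2_one (M : Matrix (Fin d × Fin d) (Fin d × Fin d) ℂ) : conj2 1 M = M := by
  simp [conj2]

lemma conj2_add (U : Matrix (Fin d) (Fin d) ℂ) (M N : Matrix (Fin d × Fin d) (Fin d × Fin d) ℂ) :
    conj2 U (M + N) = conj2 U M + conj2 U N := by
  simp [conj2, Matrix.mul_add, Matrix.add_mul]

lemma conj2_smul (U : Matrix (Fin d) (Fin d) ℂ) (c : ℂ)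
    (M : Matrix (Fin d × Fin d) (Fin d × Fin d) ℂ) :
    conj2 U (c • M) = c • conj2 U M := by
  simp [conj2]

lemma conj2_sum {ι : Type*} (s : Finset ι) (U : Matrix (Fin d) (Fin d) ℂ)
    (f : ι → Matrix (Fin d × Fin d) (Fin d × Fin d) ℂ) :
    conj2 U (∑ i ∈ s, f i) = ∑ i ∈ s, conj2 U (f i) := by
  simp [conj2, Matrix.mul_sum, Matrix.sum_mul]

lemma kron_unitary {U : Matrix (Fin d) (Fin d) ℂ} (hU : U ∈ unitaryGroup (Fin d) ℂ) :
    (U ⊗ₖ U) * (U ⊗ₖ U)ᴴ = 1 := by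
  rw [conjTranspose_kronecker, ← mul_kronecker_mul, ← star_eq_conjTranspose,
    mem_unitaryGroup_iff.1 hU, one_kronecker_one]

lemma kron_unitary' {U : Matrix (Fin d) (Fin d) ℂ} (hU : U ∈ unitaryGroup (Fin d) ℂ) :
    (U ⊗ₖ U)ᴴ * (U ⊗ₖ U) = 1 := by
  rw [conjTranspose_kronecker, ← mul_kronecker_mul, ← star_eq_conjTranspose,
    mem_unitaryGroup_iff'.1 hU, one_kronecker_one]

lemma conjTranspose_mem {U : Matrix (Fin d) (Fin d) ℂ} (hU : U ∈ unitaryGroup (Fin d) ℂ) :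
    Uᴴ ∈ unitaryGroup (Fin d) ℂ := by
  rw [← star_eq_conjTranspose]; exact Unitary.star_mem hU

lemma conj2_conj2_star {U : Matrix (Fin d) (Fin d) ℂ} (hU : U ∈ unitaryGroup (Fin d) ℂ)
    (M : Matrix (Fin d × Fin d) (Fin d × Fin d) ℂ) : conj2 U (conj2 Uᴴ M) = M := by
  rw [← conj2_mul, ← star_eq_conjTranspose, mem_unitaryGroup_iff.1 hU, conj2_one]

lemma conj2_id {U : Matrix (Fin d) (Fin d) ℂ} (hU : U ∈ unitaryGroup (Fin d) ℂ) :
    conj2 U 1 = 1 := by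
  simp [conj2, kron_unitary hU]

lemma oc_mem {O : Matrix (Fin d) (Fin d) ℝ} (hO : O ∈ orthogonalGroup (Fin d) ℝ) :
    oc O ∈ unitaryGroup (Fin d) ℂ := by
  rw [mem_orthogonalGroup_iff] at hO
  rw [mem_unitaryGroup_iff]
  have h := congrArg (fun M : Matrix (Fin d) (Fin d) ℝ => M.map Complex.ofRealHom) hO
  simp only [Matrix.map_mul] at h
  rw [Matrix.map_one _ (by simp) (by simp)] at h
  rw [← h]
  congr 1
  ext i j
  simp [oc]

lemma oc_mul (A B : Matrix (Fin d) (Fin d) ℝ) : oc (A * B) = oc A * oc B := by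
  ext i j
  simp [oc, Matrix.mul_apply]

lemma mul_flip2_apply (M : Matrix (Fin d × Fin d) (Fin d × Fin d) ℂ) (p q : Fin d × Fin d) :
    (M * flip2 d) p q = M p q.swap := by
  rw [Matrix.mul_apply, Finset.sum_eq_single q.swap]
  · simp [flip2]
  · rintro ⟨a, b⟩ - h
    have : ¬ (a = q.2 ∧ b = q.1) := fun h' => h (Prod.ext h'.1 h'.2)
    simp [flip2, this]
  · simp

lemma flip2_mul_apply (M : Matrix (Fin d × Fin d) (Fin d × Fin d) ℂ) (p q : Fin d × Fin d) :
    (flip2 d * M) p q = M p.swap q := by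
  rw [Matrix.mul_apply, Finset.sum_eq_single p.swap]
  · simp [flip2]
  · rintro ⟨a, b⟩ - h
    have : ¬ (p.1 = b ∧ p.2 = a) := fun h' => h (Prod.ext h'.2.symm h'.1.symm)
    simp [flip2, this]
  · simp

lemma conj2_flip2 {U : Matrix (Fin d) (Fin d) ℂ} (hU : U ∈ unitaryGroup (Fin d) ℂ) :
    conj2 U (flip2 d) = flip2 d := by
  have : (U ⊗ₖ U) * flip2 d = flip2 d * (U ⊗ₖ U) := by
    ext p q
    rw [mul_flip2_apply, flip2_mul_apply]
    simp [mul_comm]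
  rw [conj2, this, Matrix.mul_assoc, kron_unitary hU, Matrix.mul_one]

/-- The vector `Ω = ∑ i, eᵢ ⊗ eᵢ`. -/
def omega (d : ℕ) : Fin d × Fin d → ℂ := fun p => if p.1 = p.2 then 1 else 0

lemma bell_eq : bell d = vecMulVec (omega d) (omega d) := by
  ext p q
  by_cases h1 : p.1 = p.2 <;> by_cases h2 : q.1 = q.2 <;>
    simp [bell, omega, vecMulVec_apply, h1, h2]

/-- `(U ⊗ U) Ω` has the entries of `U Uᵀ`. -/
lemma kron_mulVec_omega (U : Matrix (Fin d) (Fin d) ℂ) :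
    (U ⊗ₖ U) *ᵥ omega d = fun p => (U * Uᵀ) p.1 p.2 := by
  ext p
  simp [mulVec, dotProduct, Fintype.sum_prod_type, omega, Matrix.mul_apply]

lemma conj2_bell (U : Matrix (Fin d) (Fin d) ℂ) :
    conj2 U (bell d) =
      vecMulVec (fun p => (U * Uᵀ) p.1 p.2) (fun p => star ((U * Uᵀ) p.1 p.2)) := by
  have h : star (omega d) = omega d := by ext p; simp [omega, apply_ite]
  rw [conj2, bell_eq, mul_vecMulVec, vecMulVec_mul, kron_mulVec_omega]
  congr 1
  rw [← h, ← star_mulVec, kron_mulVec_omega]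
  rfl

lemma conj2_oc_bell {O : Matrix (Fin d) (Fin d) ℝ} (hO : O ∈ orthogonalGroup (Fin d) ℝ) :
    conj2 (oc O) (bell d) = bell d := by
  have h : oc O * (oc O)ᵀ = 1 := by
    have := mem_unitaryGroup_iff.1 (oc_mem hO)
    convert this using 2
    ext i j
    simp [oc]
  rw [conj2_bell, h]
  ext p q
  by_cases h1 : p.1 = p.2 <;> by_cases h2 : q.1 = q.2 <;>
    simp [bell, vecMulVec_apply, Matrix.one_apply, h1, h2]

/-- An operator fixed by `conj2 U` has the same pairing with `M` and with `conj2 U M`. -/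
lemma trace_conj2_mul {U : Matrix (Fin d) (Fin d) ℂ} (hU : U ∈ unitaryGroup (Fin d) ℂ)
    {X : Matrix (Fin d × Fin d) (Fin d × Fin d) ℂ} (hX : conj2 U X = X)
    (M : Matrix (Fin d × Fin d) (Fin d × Fin d) ℂ) :
    trace (conj2 U M * X) = trace (M * X) := by
  conv_lhs => rw [← hX]
  have : conj2 U M * conj2 U X = (U ⊗ₖ U) * (M * X) * (U ⊗ₖ U)ᴴ := by
    calc conj2 U M * conj2 U X
        = (U ⊗ₖ U) * M * ((U ⊗ₖ U)ᴴ * (U ⊗ₖ U)) * X * (U ⊗ₖ U)ᴴ := by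
          simp only [conj2, Matrix.mul_assoc]
      _ = _ := by rw [kron_unitary' hU]; simp only [Matrix.mul_assoc, Matrix.mul_one]
  rw [this, trace_mul_comm, ← Matrix.mul_assoc, kron_unitary' hU, Matrix.one_mul]

/-! ### Haar averages -/

section Haar

variable {G : Type*} [Group G] [TopologicalSpace G] [ContinuousMul G] [MeasurableSpace G]
  [BorelSpace G] (μ : Measure G) [μ.IsMulLeftInvariant] [IsProbabilityMeasure μ]
  (u : G →* Matrix (Fin d) (Fin d) ℂ) (hc : Continuous u) (hu : ∀ g, u g ∈ unitaryGroup (Fin d) ℂ)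

/-- The twirl of `M` over the group `G` represented on `ℂᵈ` by `u`, as an entrywise integral. -/
noncomputable def twirl (M : Matrix (Fin d × Fin d) (Fin d × Fin d) ℂ) :
    Matrix (Fin d × Fin d) (Fin d × Fin d) ℂ :=
  Matrix.of fun p q => ∫ g, conj2 (u g) M p q ∂μ

omit [ContinuousMul G] [μ.IsMulLeftInvariant] in
include hc hu in
lemma integrable_conj2 (M : Matrix (Fin d × Fin d) (Fin d × Fin d) ℂ) (p q : Fin d × Fin d) :
    Integrable (fun g => conj2 (u g) M p q) μ := by
  have hk : ∀ i j, Continuous fun g => (u g ⊗ₖ u g) i j := fun i j =>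
    (hc.matrix_elem _ _).mul (hc.matrix_elem _ _)
  simp only [conj2, Matrix.mul_apply, conjTranspose_apply, Finset.sum_mul]
  refine integrable_finsetSum _ fun r _ => integrable_finsetSum _ fun s _ => ?_
  refine Integrable.of_bound (C := ‖M s r‖) (Continuous.aestronglyMeasurable ?_) ?_
  · exact ((hk p s).mul continuous_const).mul (hk q r).star
  · refine Filter.Eventually.of_forall fun g => ?_
    have e := entry_norm_bound_of_unitary (mem_unitaryGroup_iff.2 (kron_unitary (hu g)))
    simp only [norm_mul, norm_star]
    calc _ ≤ 1 * ‖M s r‖ * 1 := by gcongr <;> exact e _ _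
      _ = _ := by ring

include hc hu in
/-- The twirl lies in the commutant of `g ↦ u g ⊗ u g`, by left invariance of the measure. -/
lemma conj2_twirl (h : G) (M : Matrix (Fin d × Fin d) (Fin d × Fin d) ℂ) :
    conj2 (u h) (twirl μ u M) = twirl μ u M := by
  have hi := integrable_conj2 μ u hc hu M
  ext p q
  have key : conj2 (u h) (twirl μ u M) p q = ∫ g, conj2 (u h) (conj2 (u g) M) p q ∂μ := by
    simp only [conj2.eq_1 (u h), Matrix.mul_apply, twirl, Matrix.of_apply, Finset.sum_mul]
    rw [integral_finsetSum _ fun r _ => integrable_finsetSum _ fun s _ =>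
      ((hi s r).const_mul _).mul_const _]
    refine Finset.sum_congr rfl fun r _ => ?_
    rw [integral_finsetSum _ fun s _ => ((hi s r).const_mul _).mul_const _]
    refine Finset.sum_congr rfl fun s _ => ?_
    rw [integral_mul_const, integral_const_mul]
  rw [key]
  simp only [← conj2_mul, ← map_mul]
  exact integral_mul_left_eq_self (fun g => conj2 (u g) M p q) h

omit [ContinuousMul G] [μ.IsMulLeftInvariant] in
include hc hu in
/-- The twirl preserves the pairings with all elements of the commutant. -/
lemma trace_twirl_mul {X : Matrix (Fin d × Fin d) (Fin d × Fin d) ℂ}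
    (hX : ∀ g, conj2 (u g) X = X) (M : Matrix (Fin d × Fin d) (Fin d × Fin d) ℂ) :
    trace (twirl μ u M * X) = trace (M * X) := by
  have hi := integrable_conj2 μ u hc hu M
  have key : trace (twirl μ u M * X) = ∫ g, trace (conj2 (u g) M * X) ∂μ := by
    simp only [trace, diag, Matrix.mul_apply, twirl, Matrix.of_apply]
    rw [integral_finsetSum _ fun r _ => integrable_finsetSum _ fun s _ => (hi r s).mul_const _]
    refine Finset.sum_congr rfl fun r _ => ?_
    rw [integral_finsetSum _ fun s _ => (hi r s).mul_const _]
    refine Finset.sum_congr rfl fun s _ => ?_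
    rw [integral_mul_const]
  rw [key]
  simp [fun g => trace_conj2_mul (hu g) (hX g) M]

end Haar

instance : BorelSpace (Matrix.unitaryGroup (Fin d) ℂ) := ⟨rfl⟩

instance : BorelSpace (Matrix.orthogonalGroup (Fin d) ℝ) := ⟨rfl⟩

/-! ### The commutant of `O ⊗ O` -/

lemma conj2_apply (U : Matrix (Fin d) (Fin d) ℂ) (A : Matrix (Fin d × Fin d) (Fin d × Fin d) ℂ)
    (i j k l : Fin d) :
    conj2 U A (i, j) (k, l) =
      ∑ a, U i a * ∑ b, U j b * ∑ c, star (U k c) * ∑ e, star (U l e) * A (a, b) (c, e) := by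
  simp only [conj2, Matrix.mul_assoc]
  rw [Matrix.mul_apply, Fintype.sum_prod_type]
  simp only [Matrix.mul_apply, Fintype.sum_prod_type, kronecker_apply, conjTranspose_apply,
    Finset.mul_sum, star_mul']
  refine Finset.sum_congr rfl fun a _ => Finset.sum_congr rfl fun b _ =>
    Finset.sum_congr rfl fun c _ => Finset.sum_congr rfl fun e _ => ?_
  ring

lemma conj2_diagonal (w : Fin d → ℂ) (A : Matrix (Fin d × Fin d) (Fin d × Fin d) ℂ)
    (i j k l : Fin d) :
    conj2 (diagonal w) A (i, j) (k, l) =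
      w i * (w j * (star (w k) * (star (w l) * A (i, j) (k, l)))) := by
  simp [conj2_apply, diagonal_apply, apply_ite]

/-- The Householder reflection `1 - (2 / ‖v‖²) v vᵀ`. -/
noncomputable def householder (v : Fin d → ℝ) : Matrix (Fin d) (Fin d) ℝ :=
  1 - (2 / (v ⬝ᵥ v)) • vecMulVec v v

lemma householder_mem {v : Fin d → ℝ} (hv : v ⬝ᵥ v ≠ 0) :
    householder v ∈ orthogonalGroup (Fin d) ℝ := by
  rw [mem_orthogonalGroup_iff]
  have ht : (householder v)ᵀ = householder v := by
    ext i j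
    simp [householder, vecMulVec_apply, Matrix.one_apply, mul_comm, eq_comm]
  rw [ht]
  have hvv : vecMulVec v v * vecMulVec v v = (v ⬝ᵥ v) • vecMulVec v v := by
    rw [vecMulVec_mul_vecMulVec]
    ext i j
    simp [vecMulVec_apply]; ring
  simp only [householder, Matrix.sub_mul, Matrix.mul_sub, Matrix.one_mul, Matrix.mul_one, smul_mul_assoc,
    mul_smul_comm, hvv, smul_smul]
  ext i j
  simp only [Matrix.sub_apply, Matrix.smul_apply, smul_eq_mul]
  field_simp
  ring

variable {A : Matrix (Fin d × Fin d) (Fin d × Fin d) ℂ}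
  (hA : ∀ O ∈ orthogonalGroup (Fin d) ℝ, conj2 (oc O) A = A)

include hA in
/-- Invariance under flipping the sign of `e_m`: an entry in which some index occurs an odd number of
times vanishes. -/
lemma entry_sign (m i j k l : Fin d) :
    A (i, j) (k, l) = (if i = m then -1 else 1) * ((if j = m then -1 else 1) *
      ((if k = m then -1 else 1) * ((if l = m then -1 else 1) * A (i, j) (k, l)))) := by
  have hO : (diagonal fun x => if x = m then (-1 : ℝ) else 1) ∈ orthogonalGroup (Fin d) ℝ := by
    rw [mem_orthogonalGroup_iff, diagonal_transpose, diagonal_mul_diagonal, ← diagonal_one]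
    congr 1
    ext x
    by_cases h : x = m <;> simp [h]
  have h := congrFun (congrFun (hA _ hO) (i, j)) (k, l)
  have e : oc (diagonal fun x => if x = m then (-1 : ℝ) else 1) =
      diagonal fun x => if x = m then (-1 : ℂ) else 1 := by
    ext x y
    by_cases h1 : x = y <;> by_cases h2 : x = m <;> simp [oc, diagonal_apply, h1, h2]
    all_goals simp_all
  rw [e, conj2_diagonal] at h
  have hs : ∀ x, star (if x = m then (-1 : ℂ) else 1) = if x = m then -1 else 1 := by
    intro x; split_ifs <;> simp
  rw [hs, hs] at h
  exact h.symm

include hA in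
/-- Invariance under permutation matrices. -/
lemma entry_perm (σ : Equiv.Perm (Fin d)) (i j k l : Fin d) :
    A (σ i, σ j) (σ k, σ l) = A (i, j) (k, l) := by
  have hO : (1 : Matrix (Fin d) (Fin d) ℝ).submatrix σ id ∈ orthogonalGroup (Fin d) ℝ := by
    rw [mem_orthogonalGroup_iff]
    ext x y
    simp [Matrix.mul_apply, Matrix.one_apply]
  have h := congrFun (congrFun (hA _ hO) (i, j)) (k, l)
  rw [conj2_apply] at h
  simpa [oc, Matrix.one_apply, apply_ite] using h

include hA in
/-- Invariance under a single reflection that is not a signed permutation ties the last free diagonal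
parameter to the other three. -/
lemma entry_refl {z o : Fin d} (hzo : z ≠ o) :
    A (z, z) (z, z) = A (z, o) (z, o) + A (z, o) (o, z) + A (z, z) (o, o) := by
  -- The reflection whose row `z` is `(3/5) e_z + (4/5) e_o`.
  set v : Fin d → ℝ := Pi.single z 1 - (2 : ℝ) • Pi.single o 1 with hv
  have hvv : v ⬝ᵥ v = 5 := by
    simp [hv, dotProduct_sub, hzo]
    norm_num
  have hO := householder_mem (v := v) (by rw [hvv]; norm_num)
  have hrow : ∀ a, oc (householder v) z a = if a = z then 3 / 5 else if a = o then 4 / 5 else 0 := by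
    intro a
    by_cases h1 : a = z
    · subst h1
      simp [oc, householder, vecMulVec_apply, hv, hzo]
      norm_num
    · by_cases h2 : a = o
      · subst h2
        simp [oc, householder, vecMulVec_apply, hv, hzo, h1]
        norm_num
      · simp [oc, householder, vecMulVec_apply, hv, hzo, h1, h2, Ne.symm h1]
  have hsum : ∀ g : Fin d → ℂ, ∑ a, oc (householder v) z a * g a = 3 / 5 * g z + 4 / 5 * g o := by
    intro g
    rw [← Finset.sum_subset (Finset.subset_univ {z, o}), Finset.sum_pair hzo]
    · simp [hrow, hzo.symm]
    · intro a _ h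
      simp only [Finset.mem_insert, Finset.mem_singleton, not_or] at h
      simp [hrow, h.1, h.2]
  have hsum' : ∀ g : Fin d → ℂ, ∑ a, star (oc (householder v) z a) * g a = 3 / 5 * g z + 4 / 5 * g o := by
    intro g
    rw [← hsum]
    simp [oc]
  have h := congrFun (congrFun (hA _ hO) (z, z)) (z, z)
  rw [conj2_apply] at h
  simp only [hsum, hsum'] at h
  have s := entry_sign hA z
  have p := entry_perm hA (Equiv.swap z o)
  have s1 := s z z z o
  have s2 := s z z o z
  have s3 := s z o z z
  have s4 := s o z z z
  have s5 := s z o o o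
  have s6 := s o z o o
  have s7 := s o o z o
  have s8 := s o o o z
  have p1 := p z z z z
  have p2 := p z o z o
  have p3 := p z o o z
  have p4 := p z z o o
  simp [hzo.symm] at s1 s2 s3 s4 s5 s6 s7 s8 p1 p2 p3 p4
  have q1 : A (z,z) (z,o) = 0 := by linear_combination s1 / 2
  have q2 : A (z,z) (o,z) = 0 := by linear_combination s2 / 2
  have q3 : A (z,o) (z,z) = 0 := by linear_combination s3 / 2
  have q4 : A (o,z) (z,z) = 0 := by linear_combination s4 / 2
  have q5 : A (z,o) (o,o) = 0 := by linear_combination s5 / 2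
  have q6 : A (o,z) (o,o) = 0 := by linear_combination s6 / 2
  have q7 : A (o,o) (z,o) = 0 := by linear_combination s7 / 2
  have q8 : A (o,o) (o,z) = 0 := by linear_combination s8 / 2
  rw [q1, q2, q3, q4, q5, q6, q7, q8, p1, p2, p3, p4] at h
  linear_combination (-625 / 288 : ℂ) * h

include hA in
/-- Every operator commuting with `O ⊗ O` for all orthogonal `O` is a combination of the identity,
the flip and `ΩΩᴴ`. -/
lemma commutant (hd : 2 ≤ d) : ∃ a b c : ℂ, A = a • 1 + b • flip2 d + c • bell d := by
  obtain ⟨z, o, hzo⟩ : ∃ z o : Fin d, z ≠ o := ⟨⟨0, by omega⟩, ⟨1, by omega⟩, by simp⟩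
  have hpair : ∀ i j : Fin d, i ≠ j → ∃ σ : Equiv.Perm (Fin d), σ z = i ∧ σ o = j := by
    intro i j hij
    refine ⟨Equiv.swap (Equiv.swap z i o) j * Equiv.swap z i, ?_, ?_⟩
    · have h1 : i ≠ Equiv.swap z i o := by
        intro h
        have := congrArg (Equiv.swap z i) h
        simp at this
        exact hzo this
      simp [Equiv.swap_apply_of_ne_of_ne h1 hij]
    · simp
  have hdiag : ∀ i : Fin d, A (i, i) (i, i) = A (z, z) (z, z) := fun i => by
    simpa using entry_perm hA (Equiv.swap z i) z z z z
  have h1 : ∀ i j : Fin d, i ≠ j → A (i, j) (i, j) = A (z, o) (z, o) := by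
    intro i j hij
    obtain ⟨σ, rfl, rfl⟩ := hpair i j hij
    exact entry_perm hA σ _ _ _ _
  have h2 : ∀ i j : Fin d, i ≠ j → A (i, j) (j, i) = A (z, o) (o, z) := by
    intro i j hij
    obtain ⟨σ, rfl, rfl⟩ := hpair i j hij
    exact entry_perm hA σ _ _ _ _
  have h3 : ∀ i j : Fin d, i ≠ j → A (i, i) (j, j) = A (z, z) (o, o) := by
    intro i j hij
    obtain ⟨σ, rfl, rfl⟩ := hpair i j hij
    exact entry_perm hA σ _ _ _ _
  have hr := entry_refl hA hzo
  refine ⟨A (z, o) (z, o), A (z, o) (o, z), A (z, z) (o, o), ?_⟩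
  ext ⟨i, j⟩ ⟨k, l⟩
  have si := entry_sign hA i i j k l
  have sj := entry_sign hA j i j k l
  have sk := entry_sign hA k i j k l
  have sl := entry_sign hA l i j k l
  simp only [Matrix.add_apply, Matrix.smul_apply, Matrix.one_apply, flip2, bell, Prod.mk.injEq,
    smul_eq_mul]
  grind

/-! ### Pairings of the identity, the flip and `ΩΩᴴ` -/

lemma flip2_mul_flip2 : flip2 d * flip2 d = 1 := by
  ext p q
  rw [mul_flip2_apply]
  simp [flip2, Matrix.one_apply, Prod.ext_iff]

lemma bell_mul_flip2 : bell d * flip2 d = bell d := by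
  ext p q
  rw [mul_flip2_apply]
  simp [bell, eq_comm]

lemma flip2_mul_bell : flip2 d * bell d = bell d := by
  ext p q
  rw [flip2_mul_apply]
  simp [bell, eq_comm]

lemma trace_flip2 : trace (flip2 d) = d := by
  simp only [trace, diag, flip2, Fintype.sum_prod_type]
  simp [eq_comm]

lemma trace_bell : trace (bell d) = d := by
  simp only [trace, diag, bell, Fintype.sum_prod_type]
  simp

lemma trace_vecMulVec_mul_bell (x y : Fin d × Fin d → ℂ) :
    trace (vecMulVec x y * bell d) = (∑ i, x (i, i)) * ∑ i, y (i, i) := by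
  have h : ∀ z : Fin d × Fin d → ℂ, z ⬝ᵥ omega d = ∑ i, z (i, i) := fun z => by
    simp [dotProduct, omega, Fintype.sum_prod_type]
  rw [bell_eq, vecMulVec_mul_vecMulVec, trace_vecMulVec, dotProduct_smul, h, h]
  simp [mul_comm]

lemma trace_bell_mul_bell : trace (bell d * bell d) = d * d := by
  have h := trace_vecMulVec_mul_bell (omega d) (omega d)
  rw [← bell_eq] at h
  rw [h]
  simp [omega]

/-- The identity and the flip have a nonsingular Gram matrix, so traces separate their span. -/
lemma span_two_ext (hd : 2 ≤ d) {A B : Matrix (Fin d × Fin d) (Fin d × Fin d) ℂ}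
    (hA : ∃ a b : ℂ, A = a • 1 + b • flip2 d) (hB : ∃ a b : ℂ, B = a • 1 + b • flip2 d)
    (h1 : trace (A * 1) = trace (B * 1)) (h2 : trace (A * flip2 d) = trace (B * flip2 d)) :
    A = B := by
  obtain ⟨a, b, rfl⟩ := hA
  obtain ⟨a', b', rfl⟩ := hB
  have d0 : (d : ℂ) ≠ 0 := by norm_cast; omega
  have d1 : (d : ℂ) * d - 1 ≠ 0 := by
    have : (d : ℂ) * d ≠ 1 := by norm_cast; nlinarith
    exact sub_ne_zero.2 this
  simp only [Matrix.add_mul, Matrix.mul_one, smul_mul_assoc, Matrix.one_mul, flip2_mul_flip2,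
    trace_add, trace_smul, trace_one, trace_flip2, smul_eq_mul, Fintype.card_prod,
    Fintype.card_fin, Nat.cast_mul] at h1 h2
  have ha : (d : ℂ) * (d * d - 1) * (a - a') = 0 := by linear_combination d * h1 - h2
  have hb : (d : ℂ) * (d * d - 1) * (b - b') = 0 := by linear_combination d * h2 - h1
  have hdne := mul_ne_zero d0 d1
  rw [sub_eq_zero.1 ((mul_eq_zero.1 ha).resolve_left hdne),
    sub_eq_zero.1 ((mul_eq_zero.1 hb).resolve_left hdne)]

/-- The Gram determinant of the identity, the flip and `ΩΩᴴ` is a nonzero multiple of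
`(d - 1)² (d + 2)`, so traces separate their span. -/
lemma span_three_ext (hd : 2 ≤ d) {A B : Matrix (Fin d × Fin d) (Fin d × Fin d) ℂ}
    (hA : ∃ a b c : ℂ, A = a • 1 + b • flip2 d + c • bell d)
    (hB : ∃ a b c : ℂ, B = a • 1 + b • flip2 d + c • bell d)
    (h1 : trace (A * 1) = trace (B * 1)) (h2 : trace (A * flip2 d) = trace (B * flip2 d))
    (h3 : trace (A * bell d) = trace (B * bell d)) :
    A = B := by
  obtain ⟨a, b, c, rfl⟩ := hA
  obtain ⟨a', b', c', rfl⟩ := hB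
  have d0 : (d : ℂ) ≠ 0 := by norm_cast; omega
  have d1 : (d : ℂ) - 1 ≠ 0 := by
    have : (d : ℂ) ≠ 1 := by norm_cast; omega
    exact sub_ne_zero.2 this
  have d2 : (d : ℂ) + 2 ≠ 0 := by norm_cast
  simp only [Matrix.add_mul, Matrix.mul_one, smul_mul_assoc, Matrix.one_mul, flip2_mul_flip2,
    bell_mul_flip2, flip2_mul_bell, trace_bell_mul_bell, trace_bell,
    trace_add, trace_smul, trace_one, trace_flip2, smul_eq_mul, Fintype.card_prod,
    Fintype.card_fin, Nat.cast_mul] at h1 h2 h3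
  have hdne := mul_ne_zero (mul_ne_zero d0 d1) d2
  have ha : (d : ℂ) * (d - 1) * (d + 2) * (a - a') = 0 := by
    linear_combination (d + 1) * h1 - h2 - h3
  have hb : (d : ℂ) * (d - 1) * (d + 2) * (b - b') = 0 := by
    linear_combination (d + 1) * h2 - h1 - h3
  have hc : (d : ℂ) * (d - 1) * (d + 2) * (c - c') = 0 := by
    linear_combination (d + 1) * h3 - h1 - h2
  rw [sub_eq_zero.1 ((mul_eq_zero.1 ha).resolve_left hdne),
    sub_eq_zero.1 ((mul_eq_zero.1 hb).resolve_left hdne),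
    sub_eq_zero.1 ((mul_eq_zero.1 hc).resolve_left hdne)]

/-- There is a diagonal unitary `U` with `|tr (U Uᵀ)|² = 2d / (d + 1)`. -/
lemma exists_unitary (hd : 2 ≤ d) : ∃ U ∈ unitaryGroup (Fin d) ℂ,
    trace (U * Uᵀ) * star (trace (U * Uᵀ)) = 2 * d / (d + 1) := by
  have d0 : (d : ℂ) ≠ 0 := by norm_cast; omega
  -- The squared phases interpolate between all ones and the `d`-th roots of unity.
  set w : ℝ → Fin d → ℂ := fun t j =>
    Complex.exp (((Real.pi * j * t / d : ℝ) : ℂ) * Complex.I) with hw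
  set f : ℝ → ℝ := fun t => Complex.normSq (∑ j, w t j * w t j) with hf
  have hfc : Continuous f := by
    refine Complex.continuous_normSq.comp (continuous_finsetSum _ fun j _ => ?_)
    simp only [hw]
    fun_prop
  have f0 : f 0 = d * d := by simp [hf, hw, Complex.normSq_natCast]
  have f1 : f 1 = 0 := by
    have h := (Complex.isPrimitiveRoot_exp d (by omega)).geom_sum_eq_zero (by omega)
    rw [← Fin.sum_univ_eq_sum_range
      (fun i => Complex.exp (2 * Real.pi * Complex.I / d) ^ i)] at h
    have : ∑ j, w 1 j * w 1 j = 0 := by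
      rw [← h]
      refine Finset.sum_congr rfl fun j _ => ?_
      simp only [hw]
      rw [← Complex.exp_add, ← Complex.exp_nat_mul]
      congr 1
      push_cast
      ring
    simp [hf, this]
  have hmem : (2 * d / (d + 1) : ℝ) ∈ Set.Icc (f 1) (f 0) := by
    have hdne : (2 : ℝ) ≤ d := by exact_mod_cast hd
    rw [f0, f1]
    refine ⟨by positivity, ?_⟩
    rw [div_le_iff₀ (by positivity)]
    nlinarith
  obtain ⟨t, -, ht⟩ := intermediate_value_Icc' zero_le_one hfc.continuousOn hmem
  refine ⟨diagonal (w t), ?_, ?_⟩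
  · rw [mem_unitaryGroup_iff, star_eq_conjTranspose, diagonal_conjTranspose,
      diagonal_mul_diagonal, ← diagonal_one]
    congr 1
    ext j
    simp only [hw, Pi.star_apply]
    rw [RCLike.star_def, Complex.mul_conj, Complex.normSq_eq_norm_sq, Complex.norm_exp_ofReal_mul_I]
    simp
  · rw [diagonal_transpose, diagonal_mul_diagonal, trace_diagonal, RCLike.star_def,
      Complex.mul_conj]
    change ((f t : ℝ) : ℂ) = _
    rw [ht]
    push_cast
    rfl

/-! ### Twirls over the orthogonal and unitary groups -/

/-- The inclusion of the real orthogonal group into complex matrices. -/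
def ocHom (d : ℕ) : orthogonalGroup (Fin d) ℝ →* Matrix (Fin d) (Fin d) ℂ where
  toFun O := oc O
  map_one' := by ext i j; by_cases h : i = j <;> simp [oc, Matrix.one_apply, h]
  map_mul' A B := oc_mul A.1 B.1

lemma ocHom_continuous : Continuous (ocHom d) :=
  continuous_subtype_val.matrix_map Complex.continuous_ofReal

/-- Among the operators commuting with `O ⊗ O` for all orthogonal `O`, those commuting with `U ⊗ U`
for all unitary `U` have no `ΩΩᴴ` component: a diagonal phase does not fix `ΩΩᴴ`. -/
lemma unitary_commutant (hd : 2 ≤ d) {A : Matrix (Fin d × Fin d) (Fin d × Fin d) ℂ}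
    (hA : ∀ U ∈ unitaryGroup (Fin d) ℂ, conj2 U A = A) :
    ∃ a b : ℂ, A = a • 1 + b • flip2 d := by
  obtain ⟨a, b, c, h⟩ := commutant (fun O hO => hA _ (oc_mem hO)) hd
  obtain ⟨z, o, hzo⟩ : ∃ z o : Fin d, z ≠ o := ⟨⟨0, by omega⟩, ⟨1, by omega⟩, by simp⟩
  -- Conjugating by the phase `i` on `e_z` negates the `(zz, oo)` entry, which equals `c`.
  have hU : diagonal (fun x => if x = z then Complex.I else 1) ∈ unitaryGroup (Fin d) ℂ := by
    rw [mem_unitaryGroup_iff, star_eq_conjTranspose, diagonal_conjTranspose,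
      diagonal_mul_diagonal, ← diagonal_one]
    congr 1
    ext j
    by_cases hj : j = z <;> simp [hj]
  have e := congrFun (congrFun (hA _ hU) (z, z)) (o, o)
  rw [conj2_diagonal] at e
  have hc : A (z, z) (o, o) = c := by
    rw [h]
    simp [flip2, bell, hzo]
  simp [hzo.symm, hc, ← mul_assoc] at e
  have : c = 0 := by linear_combination -e / 2
  exact ⟨a, b, by rw [h, this, zero_smul, add_zero]⟩


end

/-- If a nonempty finite set `V` of real orthogonal matrices is an exact
orthogonal 2-design, then there is a unitary `W` such that
`V^W · V = {W O' W† O : O, O' ∈ V}` (with product weights) is a unitary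
2-design. -/
theorem orthogonal_design_to_unitary_design (d : ℕ) (hd : 2 ≤ d)
    (μO : Measure (Matrix.orthogonalGroup (Fin d) ℝ))
    [μO.IsHaarMeasure] [IsProbabilityMeasure μO]
    (μU : Measure (Matrix.unitaryGroup (Fin d) ℂ))
    [μU.IsHaarMeasure] [IsProbabilityMeasure μU]
    (V : Finset (Matrix (Fin d) (Fin d) ℝ)) (hVne : V.Nonempty)
    (hVorth : ∀ O ∈ V, O ∈ Matrix.orthogonalGroup (Fin d) ℝ)
    (hdesign : ∀ (M : Matrix (Fin d × Fin d) (Fin d × Fin d) ℂ)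
      (p q : Fin d × Fin d),
      (1 / (V.card : ℂ)) * ∑ O ∈ V,
          ((oc O ⊗ₖ oc O) * M * (oc O ⊗ₖ oc O)ᴴ) p q
        = ∫ O : Matrix.orthogonalGroup (Fin d) ℝ,
            ((oc (O : Matrix (Fin d) (Fin d) ℝ) ⊗ₖ oc (O : Matrix (Fin d) (Fin d) ℝ)) * M *
              (oc (O : Matrix (Fin d) (Fin d) ℝ) ⊗ₖ
                oc (O : Matrix (Fin d) (Fin d) ℝ))ᴴ) p q ∂μO) :
    ∃ W : Matrix (Fin d) (Fin d) ℂ, W ∈ Matrix.unitaryGroup (Fin d) ℂ ∧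
      ∀ (M : Matrix (Fin d × Fin d) (Fin d × Fin d) ℂ) (p q : Fin d × Fin d),
        (1 / (V.card : ℂ)) ^ 2 * ∑ O ∈ V, ∑ O' ∈ V,
            (((W * oc O' * Wᴴ * oc O) ⊗ₖ (W * oc O' * Wᴴ * oc O)) * M *
              ((W * oc O' * Wᴴ * oc O) ⊗ₖ (W * oc O' * Wᴴ * oc O))ᴴ) p q
          = ∫ U : Matrix.unitaryGroup (Fin d) ℂ,
              (((U : Matrix (Fin d) (Fin d) ℂ) ⊗ₖ (U : Matrix (Fin d) (Fin d) ℂ)) * M *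
                ((U : Matrix (Fin d) (Fin d) ℂ) ⊗ₖ (U : Matrix (Fin d) (Fin d) ℂ))ᴴ) p q ∂μU := by
  obtain ⟨U, hU, hUtr⟩ := exists_unitary hd
  have hW := conjTranspose_mem hU
  refine ⟨Uᴴ, hW, fun M p q => ?_⟩
  have hcard : (V.card : ℂ) ≠ 0 := Nat.cast_ne_zero.2 (Finset.card_ne_zero.2 hVne)
  -- The average over the design, and its basic linearity.
  set T : Matrix (Fin d × Fin d) (Fin d × Fin d) ℂ → Matrix (Fin d × Fin d) (Fin d × Fin d) ℂ :=
    fun N => (1 / (V.card : ℂ)) • ∑ O ∈ V, conj2 (oc O) N with hT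
  have T_add : ∀ N N', T (N + N') = T N + T N' := fun N N' => by
    simp only [hT, conj2_add, Finset.sum_add_distrib, smul_add]
  have T_smul : ∀ (c : ℂ) N, T (c • N) = c • T N := fun c N => by
    simp only [hT, conj2_smul, ← Finset.smul_sum]
    rw [smul_comm]
  have T_fix : ∀ N, (∀ O ∈ V, conj2 (oc O) N = N) → T N = N := fun N hN => by
    simp only [hT]
    rw [Finset.sum_congr rfl hN, Finset.sum_const, ← Nat.cast_smul_eq_nsmul ℂ, smul_smul,
      one_div, inv_mul_cancel₀ hcard, one_smul]
  have T_eq : ∀ N, T N = twirl μO (ocHom d) N := fun N => by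
    ext r s
    simp only [hT, Matrix.smul_apply, Matrix.sum_apply, smul_eq_mul]
    exact hdesign N r s
  have ocu : ∀ O, ocHom d O ∈ unitaryGroup (Fin d) ℂ := fun O => oc_mem O.2
  have T_span : ∀ N, ∃ a b c : ℂ, T N = a • 1 + b • flip2 d + c • bell d := fun N =>
    commutant (fun O hO => by
      rw [T_eq]
      exact conj2_twirl μO (ocHom d) ocHom_continuous ocu ⟨O, hO⟩ N) hd
  have T_tr : ∀ X, (∀ O ∈ orthogonalGroup (Fin d) ℝ, conj2 (oc O) X = X) → ∀ N,
      trace (T N * X) = trace (N * X) := fun X hX N => by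
    rw [T_eq]
    exact trace_twirl_mul μO (ocHom d) ocHom_continuous ocu (fun O => hX _ O.2) N
  have one_inv : ∀ O ∈ orthogonalGroup (Fin d) ℝ, conj2 (oc O) 1 = 1 := fun O hO =>
    conj2_id (oc_mem hO)
  have flip_inv : ∀ O ∈ orthogonalGroup (Fin d) ℝ, conj2 (oc O) (flip2 d) = flip2 d :=
    fun O hO => conj2_flip2 (oc_mem hO)
  -- The choice of `U` makes the rotated `ΩΩᴴ` lose its `ΩΩᴴ` component under the twirl.
  have key : T (conj2 U (bell d)) = (1 / (d + 1) : ℂ) • 1 + (1 / (d + 1) : ℂ) • flip2 d := by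
    have d1 : (d : ℂ) + 1 ≠ 0 := by norm_cast
    refine span_three_ext hd (T_span _) ⟨1 / (d + 1), 1 / (d + 1), 0,
      by rw [zero_smul, add_zero]⟩ ?_ ?_ ?_
    · rw [T_tr 1 one_inv, trace_conj2_mul hU (conj2_id hU), Matrix.mul_one, trace_bell]
      simp only [Matrix.mul_one, trace_add, trace_smul, trace_one, trace_flip2, smul_eq_mul,
        Fintype.card_prod, Fintype.card_fin, Nat.cast_mul]
      field_simp
    · rw [T_tr _ flip_inv, trace_conj2_mul hU (conj2_flip2 hU), bell_mul_flip2, trace_bell]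
      simp only [Matrix.add_mul, smul_mul_assoc, Matrix.one_mul, flip2_mul_flip2,
        trace_add, trace_smul, trace_one, trace_flip2, smul_eq_mul,
        Fintype.card_prod, Fintype.card_fin, Nat.cast_mul]
      field_simp
      ring
    · rw [T_tr _ (fun O hO => conj2_oc_bell hO), conj2_bell, trace_vecMulVec_mul_bell]
      simp only [Matrix.add_mul, smul_mul_assoc, Matrix.one_mul, flip2_mul_bell,
        trace_add, trace_smul, trace_bell, smul_eq_mul]
      rw [← star_sum]
      refine hUtr.trans ?_
      field_simp
      ring
  set B := conj2 Uᴴ (T (conj2 U (T M))) with hB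
  have B_span : ∃ a b : ℂ, B = a • 1 + b • flip2 d := by
    obtain ⟨a, b, c, h⟩ := T_span M
    refine ⟨a + c * (1 / (d + 1)), b + c * (1 / (d + 1)), ?_⟩
    rw [hB, h]
    simp only [conj2_add, conj2_smul, T_add, T_smul, conj2_id hU, conj2_flip2 hU, key,
      T_fix 1 (fun O hO => one_inv O (hVorth O hO)),
      T_fix _ (fun O hO => flip_inv O (hVorth O hO)), conj2_id hW, conj2_flip2 hW]
    module
  have uc : Continuous (unitaryGroup (Fin d) ℂ).subtype := continuous_subtype_val
  have H : B = twirl μU (unitaryGroup (Fin d) ℂ).subtype M := by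
    refine span_two_ext hd B_span (unitary_commutant hd fun Y hY =>
      conj2_twirl μU _ uc (fun g => g.2) ⟨Y, hY⟩ M) ?_ ?_
    · rw [trace_twirl_mul μU _ uc (fun g => g.2) (fun g => conj2_id g.2), hB,
        trace_conj2_mul hW (conj2_id hW), T_tr 1 one_inv, trace_conj2_mul hU (conj2_id hU),
        T_tr 1 one_inv]
    · rw [trace_twirl_mul μU _ uc (fun g => g.2) (fun g => conj2_flip2 g.2), hB,
        trace_conj2_mul hW (conj2_flip2 hW), T_tr _ flip_inv, trace_conj2_mul hU (conj2_flip2 hU),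
        T_tr _ flip_inv]
  have L : B = (1 / (V.card : ℂ)) ^ 2 • ∑ O ∈ V, ∑ O' ∈ V,
      conj2 (Uᴴ * oc O' * Uᴴᴴ * oc O) M := by
    simp only [hB, hT, conj2_smul, conj2_sum, conj2_mul, conjTranspose_conjTranspose,
      ← Finset.smul_sum, smul_smul, sq]
    rw [Finset.sum_comm]
  have := congrFun (congrFun (L.symm.trans H) p) q
  simp only [Matrix.smul_apply, Matrix.sum_apply, smul_eq_mul] at this
  exact this
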